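/- Let k be an algebraically closed field of characteristic 0, let n ≥ 3 be an integer, and let q be a nondegenerate quadratic form on V = k^{n+2} with polar bilinear form B_q. Consider the diagonal action of SO(q) on Q × Q, where Q = {[y] ∈ ℙ(V) : q(y) = 0} is the projective quadric. Let Δ ⊂ Q × Q be the diagonal and T = {([x],[y]) ∈ Q × Q : B_q(x,y) = 0} (note Δ ⊆ T since B_q(x,x) = 2q(x) = 0). Then the orbits of the diagonal SO(q)-action on Q × Q are exactly the three sets Δ, T ∖ Δ, and (Q × Q) ∖ T. -/

import Mathlib

open QuadraticMap

/-- The orbit of a pair of projective points under the diagonal action of `SO(q)`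
(the determinant-one linear automorphisms preserving the quadratic form `q`). -/
def pairOrbit {k : Type*} [Field k] {N : ℕ}
    (q : QuadraticForm k (Fin N → k))
    (z : Projectivization k (Fin N → k) × Projectivization k (Fin N → k)) :
    Set (Projectivization k (Fin N → k) × Projectivization k (Fin N → k)) :=
  {z' | ∃ f : (Fin N → k) ≃ₗ[k] (Fin N → k),
      (∀ v, q (f v) = q v) ∧
      LinearMap.det (f : (Fin N → k) →ₗ[k] (Fin N → k)) = 1 ∧
      (Projectivization.map (f : (Fin N → k) →ₗ[k] (Fin N → k)) f.injective z.1,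
       Projectivization.map (f : (Fin N → k) →ₗ[k] (Fin N → k)) f.injective z.2) = z'}

section QuadraticIsometry

variable {k V : Type*} [Field k] [AddCommGroup V] [Module k V]

/-- A linear automorphism preserving `q`, of determinant `1` or `-1`. -/
def IsQuadraticIsometry (q : QuadraticForm k V) (f : V ≃ₗ[k] V) : Prop :=
  (∀ v, q (f v) = q v) ∧
    (LinearMap.det (f : V →ₗ[k] V) = 1 ∨ LinearMap.det (f : V →ₗ[k] V) = -1)

namespace IsQuadraticIsometry

variable {q : QuadraticForm k V}

lemma refl : IsQuadraticIsometry q (LinearEquiv.refl k V) :=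
  ⟨fun _ ↦ rfl, Or.inl (by simp)⟩

lemma trans {f g : V ≃ₗ[k] V} (hf : IsQuadraticIsometry q f) (hg : IsQuadraticIsometry q g) :
    IsQuadraticIsometry q (f.trans g) := by
  refine ⟨fun v ↦ by simp [hf.1, hg.1], ?_⟩
  rw [LinearEquiv.coe_trans, LinearMap.det_comp]
  rcases hf.2 with h | h <;> rcases hg.2 with h' | h' <;> simp [h, h']

end IsQuadraticIsometry

lemma polar_map_of_isometry {q : QuadraticForm k V} {f : V ≃ₗ[k] V} (hf : ∀ v, q (f v) = q v)
    (u v : V) : polar q (f u) (f v) = polar q u v := by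
  simp [polar, ← map_add, hf]

/-- The reflection in an anisotropic vector. -/
lemma exists_reflection [FiniteDimensional k V] (q : QuadraticForm k V) {r : V} (hr : q r ≠ 0) :
    ∃ f : V ≃ₗ[k] V, (∀ v, q (f v) = q v) ∧ LinearMap.det (f : V →ₗ[k] V) = -1 ∧
      ∀ v, f v = v - (polar q r v / q r) • r := by
  have h : ((q r)⁻¹ • polarBilin q r) r = 2 := by
    simp [polar_self]
    field_simp
  have hap : ∀ v, Module.reflection h v = v - (polar q r v / q r) • r := fun v ↦ by
    rw [Module.reflection_apply]
    simp [div_eq_inv_mul]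
  refine ⟨Module.reflection h, fun v ↦ ?_, ?_, hap⟩
  · rw [hap, sub_eq_add_neg, ← neg_smul, QuadraticMap.map_add q, QuadraticMap.map_smul,
      polar_smul_right, polar_comm q v r]
    simp only [smul_eq_mul]
    field_simp
    ring
  · have : (Module.reflection h : V →ₗ[k] V) =
        LinearMap.transvection (-((q r)⁻¹ • polarBilin q r)) r := by
      ext v
      simp [LinearMap.transvection.apply, Module.reflection_apply, sub_eq_add_neg]
    rw [this, LinearMap.transvection.det, LinearMap.neg_apply, h]
    norm_num

/-- Two non-orthogonal isotropic vectors with the same pairing with `x` are exchanged by a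
reflection fixing `x`. -/
lemma exists_isometry_of_polar_ne_zero [FiniteDimensional k V] {q : QuadraticForm k V}
    {x u v : V} (hu : q u = 0) (hv : q v = 0) (hx : polar q x u = polar q x v)
    (huv : polar q u v ≠ 0) :
    ∃ f, IsQuadraticIsometry q f ∧ f x = x ∧ f u = v := by
  have hr : q (u - v) = -polar q u v := by
    rw [sub_eq_add_neg, QuadraticMap.map_add q, QuadraticMap.map_neg, polar_neg_right, hu, hv]
    ring
  obtain ⟨f, hf, hd, h⟩ := exists_reflection q (r := u - v) (by simpa [hr] using huv)
  refine ⟨f, ⟨hf, Or.inr hd⟩, ?_, ?_⟩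
  · rw [h, polar_comm, polar_sub_right, hx]
    simp
  · rw [h, hr, polar_sub_left, polar_self, hu, polar_comm q v u]
    simp [huv]

/-- A vector outside the line of `x` is detected by some vector orthogonal to `x`. -/
lemma exists_polar_eq_zero_polar_ne_zero {q : QuadraticForm k V}
    (hq : ∀ v, (∀ w, polar q v w = 0) → v = 0) {x u : V} (hu : u ∉ Submodule.span k {x}) :
    ∃ a, polar q x a = 0 ∧ polar q u a ≠ 0 := by
  by_contra! H
  have hmem := mem_span_of_iInf_ker_le_ker (L := fun _ : Unit ↦ polarBilin q x)
    (K := polarBilin q u) (fun a ha ↦ by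
      simp only [iInf_const, LinearMap.mem_ker, polarBilin_apply_apply] at ha ⊢
      exact H a ha)
  rw [Set.range_const, Submodule.mem_span_singleton] at hmem
  obtain ⟨c, hc⟩ := hmem
  refine hu (Submodule.mem_span_singleton.2 ⟨c, sub_eq_zero.1 (hq _ fun w ↦ ?_)⟩)
  have := LinearMap.congr_fun hc w
  simp only [LinearMap.smul_apply, polarBilin_apply_apply] at this
  rw [polar_sub_left, polar_smul_left, this, sub_self]

lemma exists_isometry_fixing_of_polar_eq_zero [FiniteDimensional k V] {q : QuadraticForm k V}
    (hq : ∀ v, (∀ w, polar q v w = 0) → v = 0) {x u v : V} (hu : q u = 0) (hv : q v = 0)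
    (hxu : polar q x u = 0) (hxv : polar q x v = 0)
    (hu' : u ∉ Submodule.span k {x}) (hv' : v ∉ Submodule.span k {x}) :
    ∃ f, IsQuadraticIsometry q f ∧ f x = x ∧ f u = v := by
  by_cases huv : polar q u v = 0
  swap
  · exact exists_isometry_of_polar_ne_zero hu hv (hxu.trans hxv.symm) huv
  obtain ⟨c, hxc, huc, hvc⟩ : ∃ c, polar q x c = 0 ∧ polar q u c ≠ 0 ∧ polar q v c ≠ 0 := by
    obtain ⟨a, hxa, hua⟩ := exists_polar_eq_zero_polar_ne_zero hq hu'
    obtain ⟨b, hxb, hvb⟩ := exists_polar_eq_zero_polar_ne_zero hq hv'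
    by_cases hva : polar q v a = 0
    · by_cases hub : polar q u b = 0
      · exact ⟨a + b, by simp [polar_add_right, *], by simp [polar_add_right, *],
          by simp [polar_add_right, *]⟩
      · exact ⟨b, hxb, hub, hvb⟩
    · exact ⟨a, hxa, hua, hva⟩
  obtain ⟨z, hz, hxz, huz, hvz⟩ :
      ∃ z, q z = 0 ∧ polar q x z = 0 ∧ polar q u z ≠ 0 ∧ polar q v z ≠ 0 := by
    refine ⟨c + (-(q c / polar q u c)) • u, ?_, ?_, ?_, ?_⟩
    · rw [QuadraticMap.map_add q, QuadraticMap.map_smul, polar_smul_right, polar_comm q c u, hu]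
      simp [huc]
    · simp [polar_add_right, polar_smul_right, hxc, hxu]
    · simpa [polar_add_right, polar_smul_right, polar_self, hu] using huc
    · simpa [polar_add_right, polar_smul_right, polar_comm q v u, huv] using hvc
  obtain ⟨f, hf, hfx, hfu⟩ := exists_isometry_of_polar_ne_zero hu hz (hxu.trans hxz.symm) huz
  obtain ⟨g, hg, hgx, hgz⟩ := exists_isometry_of_polar_ne_zero hz hv (hxz.trans hxv.symm)
    (by rwa [polar_comm])
  exact ⟨f.trans g, hf.trans hg, by simp [hfx, hgx], by simp [hfu, hgz]⟩

/-- The orthogonal complement of a subspace of less than half the dimension contains an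
anisotropic vector. -/
lemma exists_anisotropic_orthogonal [CharZero k] [FiniteDimensional k V]
    {q : QuadraticForm k V} (hq : ∀ v, (∀ w, polar q v w = 0) → v = 0) (S : Submodule k V)
    (hS : 2 * Module.finrank k S < Module.finrank k V) :
    ∃ w, q w ≠ 0 ∧ ∀ s ∈ S, polar q s w = 0 := by
  by_contra! H
  have hrefl : (polarBilin q).IsRefl := fun u v h ↦ by
    simpa [polar_comm q v u] using h
  have hnd : (polarBilin q).Nondegenerate :=
    hrefl.nondegenerate_iff_separatingLeft.2 fun u hu ↦ hq u fun w ↦ by simpa using hu w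
  have hzero : ∀ w ∈ LinearMap.BilinForm.orthogonal (polarBilin q) S, q w = 0 := fun w hw ↦ by
    by_contra h
    obtain ⟨s, hs, hne⟩ := H w h
    exact hne (by simpa using hw s hs)
  have hle : LinearMap.BilinForm.orthogonal (polarBilin q) S ≤ S := by
    conv_rhs => rw [← LinearMap.BilinForm.orthogonal_orthogonal hnd hrefl S]
    intro u hu w hw
    have h := hzero _ (add_mem hw hu)
    rw [QuadraticMap.map_add q, hzero _ hu, hzero _ hw] at h
    simpa using h
  have := Submodule.finrank_mono hle
  rw [LinearMap.BilinForm.finrank_orthogonal hnd] at this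
  lia

lemma finrank_span_pair_le (x y : V) : Module.finrank k (Submodule.span k {x, y}) ≤ 2 := by
  classical
  have := finrank_span_finset_le_card (R := k) ({x, y} : Finset V)
  simp only [Finset.coe_insert, Finset.coe_singleton] at this
  exact this.trans Finset.card_le_two

lemma exists_isometry_fixing_of_polar_ne_zero [CharZero k] [FiniteDimensional k V]
    {q : QuadraticForm k V} (hq : ∀ v, (∀ w, polar q v w = 0) → v = 0)
    (hV : 5 ≤ Module.finrank k V) {x u v : V} (hx : q x = 0) (hu : q u = 0) (hv : q v = 0)
    (hxuv : polar q x u = polar q x v) (hxu : polar q x u ≠ 0) :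
    ∃ f, IsQuadraticIsometry q f ∧ f x = x ∧ f u = v := by
  by_cases huv : polar q u v = 0
  swap
  · exact exists_isometry_of_polar_ne_zero hu hv hxuv huv
  have hxv : polar q x v ≠ 0 := hxuv ▸ hxu
  obtain ⟨w, hw, hwS⟩ := exists_anisotropic_orthogonal hq (Submodule.span k {x, x})
    (by have := finrank_span_pair_le (k := k) x x; lia)
  have hxw : polar q x w = 0 := hwS x (Submodule.subset_span (by simp))
  classical
  obtain ⟨s, hs⟩ := Infinite.exists_notMem_finset
    ({-polar q u w / polar q x u, -polar q v w / polar q x v} : Finset k)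
  simp only [Finset.mem_insert, Finset.mem_singleton, not_or] at hs
  rw [eq_div_iff hxu, eq_div_iff hxv] at hs
  have ha : q (w + s • x) ≠ 0 := by
    rw [QuadraticMap.map_add q, QuadraticMap.map_smul, polar_smul_right, polar_comm q w x]
    simpa [hx, hxw] using hw
  have hua : polar q (w + s • x) u ≠ 0 := fun h ↦ hs.1 (by
    rw [polar_add_left, polar_smul_left, smul_eq_mul, polar_comm q w u] at h
    linear_combination h)
  have hva : polar q (w + s • x) v ≠ 0 := fun h ↦ hs.2 (by
    rw [polar_add_left, polar_smul_left, smul_eq_mul, polar_comm q w v] at h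
    linear_combination h)
  have hxa : polar q (w + s • x) x = 0 := by
    rw [polar_add_left, polar_smul_left, polar_self, hx, polar_comm, hxw]
    simp
  obtain ⟨f, hf, hd, hfa⟩ := exists_reflection q ha
  have hfx : f x = x := by simp [hfa, hxa]
  obtain ⟨g, hg, hgx, hgu⟩ := exists_isometry_of_polar_ne_zero (x := x) (u := f u) (v := v)
    (by rw [hf, hu]) hv (by rw [← hxuv, ← polar_map_of_isometry hf x u, hfx])
    (by
      rw [hfa, polar_sub_left, polar_smul_left, huv, zero_sub, neg_ne_zero, smul_eq_mul]
      exact mul_ne_zero (div_ne_zero hua ha) hva)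
  exact ⟨f.trans g, .trans ⟨hf, Or.inr hd⟩ hg, by simp [hfx, hgx], by simp [hgu]⟩

/-- Isometries act transitively on the nonzero isotropic vectors. -/
lemma exists_isometry_of_isotropic [FiniteDimensional k V] {q : QuadraticForm k V}
    (hq : ∀ v, (∀ w, polar q v w = 0) → v = 0) {x x' : V} (hx : q x = 0) (hx' : q x' = 0)
    (hx0 : x ≠ 0) (hx0' : x' ≠ 0) : ∃ f, IsQuadraticIsometry q f ∧ f x = x' := by
  obtain ⟨f, hf, -, h⟩ := exists_isometry_fixing_of_polar_eq_zero hq (x := 0) hx hx'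
    (by simp) (by simp) (by simpa using hx0) (by simpa using hx0')
  exact ⟨f, hf, h⟩

/-- An isometry may be corrected to have determinant `1` without changing its values on two
given vectors. -/
lemma exists_special_isometry [CharZero k] [FiniteDimensional k V]
    {q : QuadraticForm k V} (hq : ∀ v, (∀ w, polar q v w = 0) → v = 0)
    (hV : 5 ≤ Module.finrank k V) {f : V ≃ₗ[k] V} (hf : IsQuadraticIsometry q f) (x y : V) :
    ∃ g : V ≃ₗ[k] V, (∀ v, q (g v) = q v) ∧ LinearMap.det (g : V →ₗ[k] V) = 1 ∧
      g x = f x ∧ g y = f y := by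
  rcases hf.2 with hd | hd
  · exact ⟨f, hf.1, hd, rfl, rfl⟩
  obtain ⟨w, hw, hwS⟩ := exists_anisotropic_orthogonal hq (Submodule.span k {x, y})
    (by have := finrank_span_pair_le (k := k) x y; lia)
  have hwx : polar q w x = 0 := by
    rw [polar_comm]; exact hwS x (Submodule.subset_span (by simp))
  have hwy : polar q w y = 0 := by
    rw [polar_comm]; exact hwS y (Submodule.subset_span (by simp))
  obtain ⟨r, hr, hdr, hra⟩ := exists_reflection q hw
  refine ⟨r.trans f, fun v ↦ by simp [hf.1, hr], ?_, by simp [hra, hwx], by simp [hra, hwy]⟩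
  rw [LinearEquiv.coe_trans, LinearMap.det_comp, hd, hdr]
  norm_num

/-- Transitivity on ordered pairs of orthogonal, independent isotropic vectors. -/
lemma exists_isometry_pair_of_polar_eq_zero [FiniteDimensional k V] {q : QuadraticForm k V}
    (hq : ∀ v, (∀ w, polar q v w = 0) → v = 0) {x y x' y' : V}
    (hx : q x = 0) (hy : q y = 0) (hx' : q x' = 0) (hy' : q y' = 0)
    (hx0 : x ≠ 0) (hx0' : x' ≠ 0) (hxy : polar q x y = 0) (hxy' : polar q x' y' = 0)
    (hind : y ∉ Submodule.span k {x}) (hind' : y' ∉ Submodule.span k {x'}) :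
    ∃ f, IsQuadraticIsometry q f ∧ f x = x' ∧ f y = y' := by
  obtain ⟨f, hf, rfl⟩ := exists_isometry_of_isotropic hq hx hx' hx0 hx0'
  obtain ⟨g, hg, hgx, hgy⟩ := exists_isometry_fixing_of_polar_eq_zero hq (x := f x) (u := f y)
    (v := y') (by rw [hf.1, hy]) hy' (by rw [polar_map_of_isometry hf.1, hxy]) hxy'
    (fun h ↦ hind (by
      obtain ⟨c, hc⟩ := Submodule.mem_span_singleton.1 h
      exact Submodule.mem_span_singleton.2 ⟨c, f.injective (by rw [map_smul, hc])⟩)) hind'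
  exact ⟨f.trans g, hf.trans hg, by simp [hgx], by simp [hgy]⟩

/-- Transitivity on ordered pairs of isotropic vectors with a given nonzero pairing. -/
lemma exists_isometry_pair_of_polar_ne_zero [CharZero k] [FiniteDimensional k V]
    {q : QuadraticForm k V} (hq : ∀ v, (∀ w, polar q v w = 0) → v = 0)
    (hV : 5 ≤ Module.finrank k V) {x y x' y' : V}
    (hx : q x = 0) (hy : q y = 0) (hx' : q x' = 0) (hy' : q y' = 0)
    (hxy : polar q x y ≠ 0) (h : polar q x y = polar q x' y') :
    ∃ f, IsQuadraticIsometry q f ∧ f x = x' ∧ f y = y' := by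
  have hx0 : x ≠ 0 := by rintro rfl; simp at hxy
  have hx0' : x' ≠ 0 := by rintro rfl; simp [h] at hxy
  obtain ⟨f, hf, rfl⟩ := exists_isometry_of_isotropic hq hx hx' hx0 hx0'
  obtain ⟨g, hg, hgx, hgy⟩ := exists_isometry_fixing_of_polar_ne_zero hq hV (x := f x)
    (u := f y) (v := y') hx' (by rw [hf.1, hy]) hy' (by rw [polar_map_of_isometry hf.1, h])
    (by rwa [polar_map_of_isometry hf.1])
  exact ⟨f.trans g, hf.trans hg, by simp [hgx], by simp [hgy]⟩

lemma Projectivization.exists_rep_map_eq_smul (f : V ≃ₗ[k] V) (p : Projectivization k V) :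
    ∃ a : k, a ≠ 0 ∧
      (Projectivization.map (f : V →ₗ[k] V) f.injective p).rep = a • f p.rep := by
  have hne : (f : V →ₗ[k] V) p.rep ≠ 0 := by simpa using p.rep_nonzero
  have h : Projectivization.map (f : V →ₗ[k] V) f.injective p =
      Projectivization.mk k ((f : V →ₗ[k] V) p.rep) hne := by
    conv_lhs => rw [← p.mk_rep]
    rw [Projectivization.map_mk]
  obtain ⟨a, ha⟩ := Projectivization.exists_smul_eq_mk_rep k _ hne
  exact ⟨a, a.ne_zero, by rw [h, ← ha]; rfl⟩

lemma Projectivization.map_eq_of_apply_rep (f : V ≃ₗ[k] V) {p p' : Projectivization k V}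
    {c : k} (h : f p.rep = c • p'.rep) :
    Projectivization.map (f : V →ₗ[k] V) f.injective p = p' := by
  conv_lhs => rw [← p.mk_rep]
  conv_rhs => rw [← p'.mk_rep]
  rw [Projectivization.map_mk, Projectivization.mk_eq_mk_iff']
  exact ⟨c, h.symm⟩

lemma Projectivization.rep_notMem_span {p p' : Projectivization k V} (h : p ≠ p') :
    p'.rep ∉ Submodule.span k {p.rep} := fun hmem ↦ by
  obtain ⟨c, hc⟩ := Submodule.mem_span_singleton.1 hmem
  refine h ?_
  rw [← p.mk_rep, ← p'.mk_rep, eq_comm, Projectivization.mk_eq_mk_iff']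
  exact ⟨c, hc⟩

lemma map_rep_map_eq_zero_iff {q : QuadraticForm k V} {f : V ≃ₗ[k] V} (hf : ∀ v, q (f v) = q v)
    (p : Projectivization k V) :
    q (Projectivization.map (f : V →ₗ[k] V) f.injective p).rep = 0 ↔ q p.rep = 0 := by
  obtain ⟨a, ha, h⟩ := Projectivization.exists_rep_map_eq_smul f p
  simp [h, QuadraticMap.map_smul, hf, ha]

lemma polar_rep_map_eq_zero_iff {q : QuadraticForm k V} {f : V ≃ₗ[k] V}
    (hf : ∀ v, q (f v) = q v) (p p' : Projectivization k V) :
    polar q (Projectivization.map (f : V →ₗ[k] V) f.injective p).rep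
      (Projectivization.map (f : V →ₗ[k] V) f.injective p').rep = 0 ↔
      polar q p.rep p'.rep = 0 := by
  obtain ⟨a, ha, h⟩ := Projectivization.exists_rep_map_eq_smul f p
  obtain ⟨b, hb, h'⟩ := Projectivization.exists_rep_map_eq_smul f p'
  simp [h, h', polar_smul_left, polar_smul_right, polar_map_of_isometry hf, ha, hb]

end QuadraticIsometry

/-- To reach `z'` from `z` it suffices to find an isometry of determinant `1` or `-1` carrying
representatives to multiples of representatives. -/
lemma mem_pairOrbit_of_isometry {k : Type*} [Field k] [CharZero k] {N : ℕ} (hN : 5 ≤ N)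
    {q : QuadraticForm k (Fin N → k)} (hq : ∀ v, (∀ w, polar q v w = 0) → v = 0)
    {z z' : Projectivization k (Fin N → k) × Projectivization k (Fin N → k)}
    {f : (Fin N → k) ≃ₗ[k] (Fin N → k)} (hf : IsQuadraticIsometry q f) {a b : k}
    (h1 : f z.1.rep = a • z'.1.rep) (h2 : f z.2.rep = b • z'.2.rep) : z' ∈ pairOrbit q z := by
  obtain ⟨g, hg, hd, hg1, hg2⟩ :=
    exists_special_isometry hq (by simpa using hN) hf z.1.rep z.2.rep
  exact ⟨g, hg, hd, Prod.ext (Projectivization.map_eq_of_apply_rep g (hg1.trans h1))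
    (Projectivization.map_eq_of_apply_rep g (hg2.trans h2))⟩

/-- The orbits of the diagonal action of `SO(q)` on `Q × Q`, where `Q ⊂ ℙ(k^{n+2})` is the
smooth projective quadric `{q = 0}`, are exactly the diagonal `Δ`, `T ∖ Δ` and
`(Q × Q) ∖ T`, where `T = {([x],[y]) ∈ Q × Q | B_q(x,y) = 0}`. -/
theorem stmt1 (k : Type*) [Field k] [IsAlgClosed k] [CharZero k]
    (n : ℕ) (hn : 3 ≤ n)
    (q : QuadraticForm k (Fin (n + 2) → k))
    (hq : ∀ v, (∀ w, polar q v w = 0) → v = 0)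
    (Qs : Set (Projectivization k (Fin (n + 2) → k)))
    (hQs : Qs = {p | q p.rep = 0})
    (Δ T : Set (Projectivization k (Fin (n + 2) → k) × Projectivization k (Fin (n + 2) → k)))
    (hΔ : Δ = {z | z.1 ∈ Qs ∧ z.1 = z.2})
    (hT : T = {z | z.1 ∈ Qs ∧ z.2 ∈ Qs ∧ polar q z.1.rep z.2.rep = 0}) :
    Δ ⊆ T ∧
    (∀ z ∈ Δ, pairOrbit q z = Δ) ∧
    (∀ z ∈ T \ Δ, pairOrbit q z = T \ Δ) ∧
    (∀ z ∈ (Qs ×ˢ Qs) \ T, pairOrbit q z = (Qs ×ˢ Qs) \ T) ∧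
    Qs ×ˢ Qs = Δ ∪ (T \ Δ) ∪ ((Qs ×ˢ Qs) \ T) := by
  subst hQs hΔ hT
  have hsub : {z : Projectivization k (Fin (n + 2) → k) × Projectivization k (Fin (n + 2) → k) |
      z.1 ∈ {p | q p.rep = 0} ∧ z.1 = z.2} ⊆ {z | z.1 ∈ {p | q p.rep = 0} ∧
      z.2 ∈ {p | q p.rep = 0} ∧ polar q z.1.rep z.2.rep = 0} := by
    rintro ⟨p, p'⟩ ⟨hp, rfl : p = p'⟩
    refine ⟨hp, hp, ?_⟩
    rw [polar_self, show q p.rep = 0 from hp, smul_zero]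
  refine ⟨hsub, ?_, ?_, ?_, ?_⟩
  · rintro ⟨p, p'⟩ ⟨hp, rfl : p = p'⟩
    ext ⟨r, r'⟩
    constructor
    · rintro ⟨f, hf, -, h⟩
      rw [← h]
      exact ⟨(map_rep_map_eq_zero_iff hf p).2 hp, rfl⟩
    · rintro ⟨hr, rfl : r = r'⟩
      obtain ⟨f, hf, h⟩ := exists_isometry_of_isotropic hq hp hr p.rep_nonzero r.rep_nonzero
      rw [← one_smul k r.rep] at h
      exact mem_pairOrbit_of_isometry (by lia) hq hf h h
  · rintro ⟨p, p'⟩ ⟨⟨hp, hp', hpp⟩, hne⟩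
    have hpne : p ≠ p' := fun h ↦ hne ⟨hp, h⟩
    ext ⟨r, r'⟩
    constructor
    · rintro ⟨f, hf, -, h⟩
      rw [← h]
      exact ⟨⟨(map_rep_map_eq_zero_iff hf p).2 hp, (map_rep_map_eq_zero_iff hf p').2 hp',
        (polar_rep_map_eq_zero_iff hf p p').2 hpp⟩,
        fun h ↦ hpne (Projectivization.map_injective _ f.injective h.2)⟩
    · rintro ⟨⟨hr, hr', hrr⟩, hne'⟩
      have hrne : r ≠ r' := fun h ↦ hne' ⟨hr, h⟩
      obtain ⟨f, hf, h, h'⟩ := exists_isometry_pair_of_polar_eq_zero hq hp hp' hr hr'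
        p.rep_nonzero r.rep_nonzero hpp hrr (Projectivization.rep_notMem_span hpne)
        (Projectivization.rep_notMem_span hrne)
      rw [← one_smul k r.rep] at h
      rw [← one_smul k r'.rep] at h'
      exact mem_pairOrbit_of_isometry (by lia) hq hf h h'
  · rintro ⟨p, p'⟩ ⟨⟨hp, hp'⟩, hT⟩
    have hpp : polar q p.rep p'.rep ≠ 0 := fun h ↦ hT ⟨hp, hp', h⟩
    ext ⟨r, r'⟩
    constructor
    · rintro ⟨f, hf, -, h⟩
      rw [← h]
      exact ⟨⟨(map_rep_map_eq_zero_iff hf p).2 hp, (map_rep_map_eq_zero_iff hf p').2 hp'⟩,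
        fun h ↦ hpp ((polar_rep_map_eq_zero_iff hf p p').1 h.2.2)⟩
    · rintro ⟨⟨hr, hr'⟩, hT'⟩
      have hrr : polar q r.rep r'.rep ≠ 0 := fun h ↦ hT' ⟨hr, hr', h⟩
      obtain ⟨f, hf, h, h'⟩ := exists_isometry_pair_of_polar_ne_zero hq (by simp; lia) hp hp' hr
        (y' := (polar q p.rep p'.rep / polar q r.rep r'.rep) • r'.rep)
        (by rw [QuadraticMap.map_smul, show q r'.rep = 0 from hr', smul_zero]) hpp
        (by rw [polar_smul_right, smul_eq_mul, div_mul_cancel₀ _ hrr])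
      rw [← one_smul k r.rep] at h
      exact mem_pairOrbit_of_isometry (by lia) hq hf h h'
  · rw [Set.union_sdiff_cancel hsub, Set.union_sdiff_cancel]
    exact fun z hz ↦ ⟨hz.1, hz.2.1⟩
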